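/- Let Σ be a strongly symmetric fan in ℝ^r and δ, δ' ∈ Σ with span(δ) = span(δ'). Then Star(δ) = Star(δ') as fans in ℝ^r/span(δ). -/

import Mathlib

open scoped Classical Pointwise BigOperators

noncomputable section

abbrev Vr (r : ℕ) : Type := Fin r → ℝ

/-- The convex cone generated by a finite set of vectors. -/
def coneGen {M : Type*} [AddCommGroup M] [Module ℝ M] (s : Finset M) : Set M :=
  { x | ∃ c : M → ℝ, (∀ v, 0 ≤ c v) ∧ x = ∑ v ∈ s, c v • v }

/-- Dimension of the linear span of a set. -/
def spanDim {M : Type*} [AddCommGroup M] [Module ℝ M] (s : Set M) : ℕ :=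
  Module.finrank ℝ (Submodule.span ℝ s)

/-- A (linear) hyperplane: the kernel of a nonzero linear functional. -/
def IsHyp {M : Type*} [AddCommGroup M] [Module ℝ M] (H : Set M) : Prop :=
  ∃ f : M →ₗ[ℝ] ℝ, f ≠ 0 ∧ H = {x | f x = 0}

/-- A strongly convex rational polyhedral cone with respect to the lattice `N`. -/
def IsNCone {r : ℕ} (N : AddSubgroup (Vr r)) (σ : Set (Vr r)) : Prop :=
  ∃ s : Finset (Vr r), ↑s ⊆ (N : Set (Vr r)) ∧ σ = coneGen s ∧ σ ∩ (-σ) ⊆ {0}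

/-- `τ` is a face of `σ`. -/
def IsFaceOf {M : Type*} [AddCommGroup M] [Module ℝ M] (τ σ : Set M) : Prop :=
  ∃ m : M →ₗ[ℝ] ℝ, (∀ x ∈ σ, 0 ≤ m x) ∧ τ = σ ∩ {x | m x = 0}

/-- A fan in the lattice `N`. -/
structure IsFan {r : ℕ} (N : AddSubgroup (Vr r)) (F : Set (Set (Vr r))) : Prop where
  finite : F.Finite
  nonempty : F.Nonempty
  cones : ∀ σ ∈ F, IsNCone N σ
  faces : ∀ σ ∈ F, ∀ τ : Set (Vr r), IsFaceOf τ σ → τ ∈ F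
  inter : ∀ σ₁ ∈ F, ∀ σ₂ ∈ F, IsFaceOf (σ₁ ∩ σ₂) σ₁ ∧ IsFaceOf (σ₁ ∩ σ₂) σ₂

/-- Completeness: the support is everything. -/
def FanComplete {M : Type*} (F : Set (Set M)) : Prop := ⋃₀ F = Set.univ

/-- Strong symmetry: complete, and the support of the codimension-one cones is a
finite union of hyperplanes. -/
def SSymm {M : Type*} [AddCommGroup M] [Module ℝ M] (F : Set (Set M)) : Prop :=
  FanComplete F ∧ ∃ Hs : Finset (Set M), (∀ h ∈ Hs, IsHyp h) ∧
    ⋃₀ {τ ∈ F | spanDim τ = Module.finrank ℝ M - 1} = ⋃₀ ↑Hs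

/-- Central symmetry. -/
def CSymm {M : Type*} [AddCommGroup M] (F : Set (Set M)) : Prop := ∀ σ ∈ F, -σ ∈ F

/-- `b` is a ℤ-basis of the subgroup `L` of `ℝ^r`. -/
def IsZBasis {r d : ℕ} (L : AddSubgroup (Vr r)) (b : Fin d → Vr r) : Prop :=
  LinearIndependent ℝ b ∧ AddSubgroup.closure (Set.range b) = L

/-- A (full-rank) lattice in `ℝ^r`. -/
def IsLattice {r : ℕ} (N : AddSubgroup (Vr r)) : Prop :=
  ∃ b : Fin r → Vr r, IsZBasis N b

/-- A cone generated by a part of a ℤ-basis of `L`. -/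
def SmoothCone {r : ℕ} (L : AddSubgroup (Vr r)) (σ : Set (Vr r)) : Prop :=
  ∃ (d : ℕ) (b : Fin d → Vr r) (s : Finset (Fin d)),
    IsZBasis L b ∧ σ = coneGen (s.image b)

/-- Chambers of an arrangement: connected components of the complement. -/
def chambers {r : ℕ} (A : Finset (Set (Vr r))) : Set (Set (Vr r)) :=
  { K | ∃ x ∈ (⋃₀ (A : Set (Set (Vr r))))ᶜ,
      K = connectedComponentIn (⋃₀ (A : Set (Set (Vr r))))ᶜ x }

/-- An open simplicial cone of full dimension. -/
def IsOpenSimplicialCone {r : ℕ} (K : Set (Vr r)) : Prop :=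
  ∃ b : Fin r → Vr r, LinearIndependent ℝ b ∧
    K = { x | ∃ c : Fin r → ℝ, (∀ i, 0 < c i) ∧ x = ∑ i, c i • b i }

def ker0 {r : ℕ} (α : Vr r →ₗ[ℝ] ℝ) : Set (Vr r) := {x | α x = 0}

/-- Walls of a chamber `K`. -/
def walls {r : ℕ} (A : Finset (Set (Vr r))) (K : Set (Vr r)) : Set (Set (Vr r)) :=
  { H | H ∈ A ∧ spanDim (H ∩ closure K) = r - 1 }

/-- The set `B^K` of inward-pointing normals of the walls of `K`. -/
def BK {r : ℕ} (A : Finset (Set (Vr r))) (R : Finset (Vr r →ₗ[ℝ] ℝ)) (K : Set (Vr r)) :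
    Finset (Vr r →ₗ[ℝ] ℝ) :=
  R.filter (fun α => ker0 α ∈ walls A K ∧ K ⊆ {x | 0 ≤ α x})

/-- A crystallographic arrangement `(A, R)`. -/
structure IsCrystArr {r : ℕ} (A : Finset (Set (Vr r))) (R : Finset (Vr r →ₗ[ℝ] ℝ)) : Prop where
  simplicial : ∀ K ∈ chambers A, IsOpenSimplicialCone K
  hyps : (A : Set (Set (Vr r))) = (fun α => ker0 α) '' (R : Set (Vr r →ₗ[ℝ] ℝ))
  nonzero : ∀ α ∈ R, α ≠ 0
  neg_mem : ∀ α ∈ R, -α ∈ R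
  reduced : ∀ α ∈ R, ∀ β ∈ R, (∃ c : ℝ, β = c • α) → β = α ∨ β = -α
  integral : ∀ K ∈ chambers A, ∀ β ∈ R,
    β ∈ Submodule.span ℤ ((BK A R K : Set (Vr r →ₗ[ℝ] ℝ)))

/-- The set of all intersections of closed chambers of `A`. -/
def closedChamberInts {r : ℕ} (A : Finset (Set (Vr r))) : Set (Set (Vr r)) :=
  { σ | ∃ S : Set (Set (Vr r)), S.Nonempty ∧ S ⊆ chambers A ∧ σ = ⋂₀ (closure '' S) }

/-- The lattice dual to `M_R = ∑_{α ∈ R} ℤ α`. -/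
def dualLattice {r : ℕ} (R : Finset (Vr r →ₗ[ℝ] ℝ)) : AddSubgroup (Vr r) where
  carrier := { x | ∀ α ∈ R, ∃ k : ℤ, α x = k }
  zero_mem' := fun α _ => ⟨0, by simp⟩
  add_mem' := by
    intro x y hx hy α hα
    obtain ⟨k, hk⟩ := hx α hα
    obtain ⟨m, hm⟩ := hy α hα
    exact ⟨k + m, by simp [hk, hm]⟩
  neg_mem' := by
    intro x hx α hα
    obtain ⟨k, hk⟩ := hx α hα
    exact ⟨-k, by simp [hk]⟩

/-- The star fan of `δ`, as a collection of cones in the quotient by `E`. -/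
def starAt {r : ℕ} (F : Set (Set (Vr r))) (δ : Set (Vr r)) (E : Submodule ℝ (Vr r)) :
    Set (Set (Vr r ⧸ E)) :=
  { τ | ∃ σ ∈ F, δ ⊆ σ ∧ τ = E.mkQ '' σ }

/-- The positive roots `R_+^K` at the chamber `K`. -/
def RplusF {r : ℕ} (A : Finset (Set (Vr r))) (R : Finset (Vr r →ₗ[ℝ] ℝ)) (K : Set (Vr r)) :
    Finset (Vr r →ₗ[ℝ] ℝ) :=
  R.filter (fun α => α ∈ coneGen (BK A R K))

/-- `ρ^K`, the half-sum of the positive roots at `K`. -/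
def rhoK {r : ℕ} (A : Finset (Set (Vr r))) (R : Finset (Vr r →ₗ[ℝ] ℝ)) (K : Set (Vr r)) :
    Vr r →ₗ[ℝ] ℝ :=
  (1/2 : ℝ) • ∑ α ∈ RplusF A R K, α

end

/-! In a strongly symmetric fan `F` the cones are exactly the closed faces of the arrangement of
hyperplanes covered by the walls of `F`: a cone cannot meet both sides of such a hyperplane, and a
full-dimensional cone cannot be left without crossing a wall. Modulo `span δ`, a cone containing `δ`
is cut out only by the hyperplanes containing `span δ`: the other inequalities are achieved by
adding a large multiple of a relative interior point of `δ`. Hence `Star(δ)` is the fan of closed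
faces of the subarrangement of hyperplanes containing `span δ`, which depends only on `span δ`. -/

open Filter Topology

section FinitelyGeneratedCone

variable {M : Type*} [AddCommGroup M] [Module ℝ M] {s : Finset M} {x : M}

lemma coneGen_eq_hull (s : Finset M) :
    coneGen s = (PointedCone.hull ℝ (s : Set M) : Set M) := by
  ext x
  rw [SetLike.mem_coe, Submodule.mem_span_finset']
  constructor
  · rintro ⟨c, hc, rfl⟩
    exact ⟨fun v => ⟨c v, hc v⟩, Finset.sum_coe_sort s fun v => c v • v⟩
  · rintro ⟨c, rfl⟩
    refine ⟨fun v => if h : v ∈ s then c ⟨v, h⟩ else 0, fun v => ?_, ?_⟩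
    · dsimp only
      split_ifs
      exacts [(c _).2, le_rfl]
    · rw [← Finset.sum_coe_sort s]
      exact Finset.sum_congr rfl fun v _ => by simp

lemma exists_mem_coneGen_erase (hs : ¬LinearIndepOn ℝ id (s : Set M)) (hx : x ∈ coneGen s) :
    ∃ v ∈ s, x ∈ coneGen (s.erase v) := by
  obtain ⟨c, hc, rfl⟩ := hx
  obtain ⟨g, hg, hpos⟩ : ∃ g : M → ℝ, ∑ v ∈ s, g v • v = 0 ∧ ∃ v ∈ s, 0 < g v := by
    rw [linearIndepOn_finset_iff] at hs
    push Not at hs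
    obtain ⟨g, hg, v, hv, hgv⟩ := hs
    rcases hgv.lt_or_gt with h | h
    · exact ⟨-g, by simpa using hg, v, hv, by simpa using h⟩
    · exact ⟨g, hg, v, hv, h⟩
  obtain ⟨u, hu, hmin⟩ := {v ∈ s | 0 < g v}.exists_min_image (fun v => c v / g v)
    (by simpa [Finset.Nonempty] using hpos)
  rw [Finset.mem_filter] at hu
  set ratio := c u / g u
  have hratio : 0 ≤ ratio := div_nonneg (hc u) hu.2.le
  refine ⟨u, hu.1, fun v => if v ∈ s then c v - ratio * g v else 0, fun v => ?_, ?_⟩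
  · dsimp only
    split_ifs with hv
    · rcases lt_or_ge 0 (g v) with h | h
      · have := (le_div_iff₀ h).1 (hmin v (Finset.mem_filter.2 ⟨hv, h⟩))
        linarith
      · linarith [hc v, mul_nonpos_of_nonneg_of_nonpos hratio h]
    · exact le_rfl
  · have hu0 : c u - ratio * g u = 0 := by
      rw [div_mul_cancel₀ _ hu.2.ne', sub_self]
    rw [Finset.sum_erase s (by simp [hu.1, hu0])]
    calc ∑ v ∈ s, c v • v = ∑ v ∈ s, c v • v - ratio • ∑ v ∈ s, g v • v := by simp [hg]
      _ = ∑ v ∈ s, (c v - ratio * g v) • v := by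
        simp only [Finset.smul_sum, sub_smul, mul_smul, Finset.sum_sub_distrib]
      _ = _ := Finset.sum_congr rfl fun v hv => by simp only [if_pos hv]

variable [TopologicalSpace M] [IsTopologicalAddGroup M] [ContinuousSMul ℝ M] [T2Space M]

lemma isClosed_coneGen_of_linearIndepOn (hs : LinearIndepOn ℝ id (s : Set M)) :
    IsClosed (coneGen s) := by
  let L : (s → ℝ) →ₗ[ℝ] M := Fintype.linearCombination ℝ (fun v : s => (v : M))
  have hker : LinearMap.ker L = ⊥ :=
    LinearMap.ker_eq_bot.2 hs.fintypeLinearCombination_injective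
  have himage : coneGen s = L '' Set.Ici 0 := by
    rw [coneGen_eq_hull]
    ext x
    rw [SetLike.mem_coe, Submodule.mem_span_finset']
    constructor
    · rintro ⟨c, rfl⟩
      exact ⟨fun v => c v, fun v => (c v).2, rfl⟩
    · rintro ⟨c, hc, rfl⟩
      exact ⟨fun v => ⟨c v, hc v⟩, rfl⟩
  rw [himage]
  exact (LinearMap.isClosedEmbedding_of_injective hker).isClosedMap _ isClosed_Ici

lemma isClosed_coneGen (s : Finset M) : IsClosed (coneGen s) := by
  induction s using Finset.strongInduction with
  | H s ih =>
    by_cases hs : LinearIndepOn ℝ id (s : Set M)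
    · exact isClosed_coneGen_of_linearIndepOn hs
    · have hunion : coneGen s = ⋃ v ∈ s, coneGen (s.erase v) := by
        refine Set.Subset.antisymm (fun x hx => ?_) (Set.iUnion₂_subset fun v _ => ?_)
        · simpa using exists_mem_coneGen_erase hs hx
        · rw [coneGen_eq_hull, coneGen_eq_hull]
          exact Submodule.span_mono (Finset.erase_subset v s)
      rw [hunion]
      exact s.finite_toSet.isClosed_biUnion fun v hv => ih _ (Finset.erase_ssubset hv)

end FinitelyGeneratedCone

lemma eventually_forall_mem_imp_mem {X : Type*} [TopologicalSpace X] {G : Set (Set X)}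
    (hG : G.Finite) (hclosed : ∀ τ ∈ G, IsClosed τ) (q : X) :
    ∀ᶠ x in 𝓝 q, ∀ τ ∈ G, x ∈ τ → q ∈ τ := by
  refine (eventually_all_finite hG).2 fun τ hτ => ?_
  by_cases hq : q ∈ τ
  · exact .of_forall fun _ _ => hq
  · filter_upwards [(hclosed τ hτ).isOpen_compl.mem_nhds hq] with x hx hxτ using absurd hxτ hx

section GenericPoint

variable {V : Type*} [AddCommGroup V] [Module ℝ V]

lemma notMem_of_mem_segment_of_notMem_sup_span {p : Submodule ℝ V} {w y z : V}
    (hy : y ∉ p ⊔ Submodule.span ℝ {w}) (hz : z ∈ segment ℝ w y) (hzw : z ≠ w) : z ∉ p := by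
  rw [segment_eq_image_lineMap] at hz
  obtain ⟨t, -, rfl⟩ := hz
  intro hzp
  have ht : t ≠ 0 := by
    rintro rfl
    exact hzw (AffineMap.lineMap_apply_zero w y)
  refine hy ((Submodule.smul_mem_iff _ ht).1 ?_)
  have hty : t • y = AffineMap.lineMap w y t + (t - 1) • w := by
    rw [AffineMap.lineMap_apply_module]
    module
  rw [hty]
  exact Submodule.add_mem_sup hzp (Submodule.smul_mem _ _ (Submodule.mem_span_singleton_self w))

variable [TopologicalSpace V] [IsTopologicalAddGroup V] [ContinuousSMul ℝ V] [T2Space V]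
  [FiniteDimensional ℝ V] {P : Set (Submodule ℝ V)} {W : Submodule ℝ V}

lemma dense_setOf_forall_notMem_submodule (hP : P.Finite) (htop : ∀ p ∈ P, p ≠ ⊤) :
    Dense {x : V | ∀ p ∈ P, x ∉ p} := by
  have hinter : {x : V | ∀ p ∈ P, x ∉ p} = ⋂₀ ((fun p : Submodule ℝ V => (p : Set V)ᶜ) '' P) := by
    ext x
    simp
  rw [hinter]
  refine (hP.image _).dense_sInter ?_ ?_ <;> rintro _ ⟨p, hp, rfl⟩
  · exact p.closed_of_finiteDimensional.isOpen_compl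
  · rw [← interior_eq_empty_iff_dense_compl, ← Set.not_nonempty_iff_eq_empty]
    exact fun h => htop p hp (p.eq_top_of_nonempty_interior' h)

lemma frequently_mem_and_forall_notMem_submodule (hP : P.Finite) (hW : ∀ p ∈ P, ¬W ≤ p) {q : V}
    (hq : q ∈ W) : ∃ᶠ y in 𝓝 q, y ∈ W ∧ ∀ p ∈ P, y ∉ p := by
  have hdense := dense_setOf_forall_notMem_submodule (hP.image (Submodule.comap W.subtype)) <| by
    rintro _ ⟨p, hp, rfl⟩ htop
    exact hW p hp (Submodule.comap_subtype_eq_top.1 htop)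
  rw [frequently_iff]
  intro U hU
  obtain ⟨y, hy, hyU⟩ := hdense.inter_nhds_nonempty
    (continuous_subtype_val.continuousAt.preimage_mem_nhds (x := (⟨q, hq⟩ : W)) hU)
  exact ⟨y, hyU, y.2, fun p hp => hy _ ⟨p, hp, rfl⟩⟩

lemma exists_mem_le_span_of_subset_sUnion {G : Set (Set V)} (hG : G.Finite)
    (hclosed : ∀ τ ∈ G, IsClosed τ) (hW : (W : Set V) ⊆ ⋃₀ G) {q : V} (hq : q ∈ W) :
    ∃ τ ∈ G, q ∈ τ ∧ W ≤ Submodule.span ℝ τ := by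
  have hfreq := frequently_mem_and_forall_notMem_submodule
    (P := {p ∈ Submodule.span ℝ '' G | ¬W ≤ p}) ((hG.image _).subset (Set.sep_subset _ _))
    (fun p hp => hp.2) hq
  obtain ⟨y, ⟨hyW, hy⟩, hnear⟩ :=
    (hfreq.and_eventually (eventually_forall_mem_imp_mem hG hclosed q)).exists
  obtain ⟨τ, hτ, hyτ⟩ := hW hyW
  refine ⟨τ, hτ, hnear τ hτ hyτ, ?_⟩
  by_contra hWτ
  exact hy _ ⟨⟨τ, hτ, rfl⟩, hWτ⟩ (Submodule.subset_span hyτ)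

end GenericPoint

section Arrangement

variable {V : Type*} [AddCommGroup V] [Module ℝ V] {A B : Set (Module.Dual ℝ V)}
  {E : Submodule ℝ V} {p q w x : V}

/-- The closed face through `q` of the hyperplane arrangement with defining functionals `A`: the
intersection of all halfspaces `{f ≥ 0}`, `f ∈ A`, containing `q`. The set `A` is meant to be closed
under negation, so that both sides of each hyperplane are taken into account. -/
def closedFace (A : Set (Module.Dual ℝ V)) (q : V) : Set V :=
  {x | ∀ f ∈ A, 0 ≤ f q → 0 ≤ f x}

/-- The localization of an arrangement at the subspace `E`: the hyperplanes containing `E`. -/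
def localization (A : Set (Module.Dual ℝ V)) (E : Submodule ℝ V) : Set (Module.Dual ℝ V) :=
  {f ∈ A | E ≤ LinearMap.ker f}

lemma closedFace_anti (hBA : B ⊆ A) (q : V) : closedFace A q ⊆ closedFace B q :=
  fun _ hx f hf => hx f (hBA hf)

lemma closedFace_subset (hq : q ∈ closedFace A w) : closedFace A q ⊆ closedFace A w :=
  fun _ hx f hf hfw => hx f hf (hq f hf hfw)

lemma eventually_pos_add_smul (hA : A.Finite) (q x : V) :
    ∀ᶠ t in 𝓝[>] (0 : ℝ), ∀ f ∈ A, 0 < f q → 0 < f (q + t • x) := by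
  refine (eventually_all_finite hA).2 fun f _ => ?_
  rw [eventually_imp_distrib_left]
  intro hfq
  have hcont : Continuous fun t : ℝ => f (q + t • x) := by
    simp only [map_add, map_smul, smul_eq_mul]
    fun_prop
  exact nhdsWithin_le_nhds (hcont.continuousAt.eventually_const_lt (by simpa using hfq))

lemma eventually_mem_closedFace_add_smul (hA : A.Finite) (hneg : ∀ f ∈ A, -f ∈ A) (p x : V) :
    ∀ᶠ t in 𝓝[>] (0 : ℝ), p ∈ closedFace A (p + t • x) := by
  filter_upwards [eventually_pos_add_smul hA p x] with t ht f hf hft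
  by_contra! hfp
  have := ht (-f) (hneg f hf) (by simpa using hfp)
  rw [LinearMap.neg_apply] at this
  linarith

lemma eventually_sub_smul_mem_closedFace (hA : A.Finite) (hneg : ∀ f ∈ A, -f ∈ A)
    (hx : x ∈ closedFace A q) : ∀ᶠ t in 𝓝[>] (0 : ℝ), q - t • x ∈ closedFace A q := by
  filter_upwards [eventually_pos_add_smul hA q (-x), self_mem_nhdsWithin] with t ht ht0 f hf hfq
  rcases hfq.lt_or_eq with hpos | hzero
  · simpa [sub_eq_add_neg] using (ht f hf hpos).le
  · have hfx := hx (-f) (hneg f hf) (by simp [← hzero])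
    rw [LinearMap.neg_apply] at hfx
    rw [map_sub, map_smul, smul_eq_mul, ← hzero]
    nlinarith [Set.mem_Ioi.1 ht0]

lemma closedFace_localization_add_smul (hp : p ∈ E) {t : ℝ} (ht : 0 < t) (q : V) :
    closedFace (localization A E) (p + t • q) = closedFace (localization A E) q := by
  ext x
  refine forall₂_congr fun f hf => ?_
  have hfp : f p = 0 := hf.2 hp
  rw [map_add, map_smul, hfp, zero_add, smul_eq_mul, mul_nonneg_iff_of_pos_left ht]

-- Moving far along `p` puts a point on the required side of each hyperplane not containing `E`,
-- without changing its class modulo `E`.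
lemma image_mkQ_closedFace (hA : A.Finite) (hp : p ∈ E)
    (hE : ∀ f ∈ A, f p = 0 → E ≤ LinearMap.ker f) (hpq : p ∈ closedFace A q) :
    E.mkQ '' closedFace A q = E.mkQ '' closedFace (localization A E) q := by
  refine (Set.image_mono (closedFace_anti (Set.sep_subset _ _) q)).antisymm ?_
  rintro _ ⟨x, hx, rfl⟩
  obtain ⟨k, hk⟩ : ∃ k : ℝ, x + k • p ∈ closedFace A q := by
    refine ((eventually_all_finite (l := atTop) hA).2 fun f hf => ?_).exists
    rw [eventually_imp_distrib_left]
    intro hfq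
    rcases (hpq f hf hfq).lt_or_eq with hpos | hzero
    · filter_upwards [eventually_ge_atTop (-f x / f p)] with k hk
      rw [div_le_iff₀ hpos] at hk
      rw [map_add, map_smul, smul_eq_mul]
      linarith
    · exact .of_forall fun k => by simpa [← hzero] using hx f ⟨hf, hE f hf hzero.symm⟩ hfq
  refine ⟨x + k • p, hk, ?_⟩
  rw [map_add, add_eq_left, Submodule.mkQ_apply, Submodule.Quotient.mk_eq_zero]
  exact E.smul_mem k hp

end Arrangement

section Fan

/-- `σ` is the carrier of `q` in `F`: the smallest cone of `F` containing `q`. In a fan, this says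
that `q` is a relative interior point of `σ`. -/
structure IsCarrier {M : Type*} (F : Set (Set M)) (σ : Set M) (q : M) : Prop where
  mem : σ ∈ F
  point_mem : q ∈ σ
  subset : ∀ τ ∈ F, q ∈ τ → σ ⊆ τ

/-- The functionals in `A` define, with both signs, the hyperplanes covered by the walls
(codimension-one cones) of `F`. -/
structure IsWallArrangement {M : Type*} [AddCommGroup M] [Module ℝ M] (F : Set (Set M))
    (A : Set (Module.Dual ℝ M)) : Prop where
  finite : A.Finite
  neg_mem : ∀ f ∈ A, -f ∈ A
  ne_zero : ∀ f ∈ A, f ≠ 0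
  sUnion_walls : ⋃₀ {τ ∈ F | spanDim τ = Module.finrank ℝ M - 1} = {x | ∃ f ∈ A, f x = 0}

lemma SSymm.exists_isWallArrangement {M : Type*} [AddCommGroup M] [Module ℝ M] {F : Set (Set M)}
    (hF : SSymm F) : ∃ A, IsWallArrangement F A := by
  obtain ⟨-, Hs, hHs, hunion⟩ := hF
  choose! f hf0 hf using hHs
  refine ⟨f '' Hs ∪ -(f '' Hs), (Hs.finite_toSet.image f).union (Hs.finite_toSet.image f).neg,
    fun g hg => ?_, ?_, ?_⟩
  · simpa [or_comm] using hg
  · rintro g (⟨H, hH, rfl⟩ | ⟨H, hH, hg⟩)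
    · exact hf0 H hH
    · exact neg_ne_zero.1 (hg ▸ hf0 H hH)
  · rw [hunion]
    ext x
    constructor
    · rintro ⟨H, hH, hx⟩
      rw [hf H hH] at hx
      exact ⟨f H, .inl ⟨H, hH, rfl⟩, hx⟩
    · rintro ⟨g, ⟨H, hH, rfl⟩ | ⟨H, hH, hg⟩, hx⟩
      · exact ⟨H, hH, (hf H hH).symm ▸ hx⟩
      · refine ⟨H, hH, (hf H hH).symm ▸ ?_⟩
        rw [Set.mem_ofPred_eq, hg, LinearMap.neg_apply, hx, neg_zero]

lemma IsFaceOf.mem_of_add_mem {M : Type*} [AddCommGroup M] [Module ℝ M] {σ τ : Set M} {x y : M}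
    (h : IsFaceOf τ σ) (hx : x ∈ σ) (hy : y ∈ σ) (hxy : x + y ∈ τ) : x ∈ τ := by
  obtain ⟨m, hm, rfl⟩ := h
  refine ⟨hx, le_antisymm ?_ (hm x hx)⟩
  have hzero : m x + m y = 0 := by rw [← map_add]; exact hxy.2
  linarith [hm y hy]

variable {r : ℕ} {N : AddSubgroup (Vr r)} {F : Set (Set (Vr r))} {A : Set (Module.Dual ℝ (Vr r))}
  {σ : Set (Vr r)} {q w x y : Vr r}

namespace IsFan

lemma exists_eq_coneGen (hF : IsFan N F) (hσ : σ ∈ F) : ∃ s, σ = coneGen s := by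
  obtain ⟨s, -, hs, -⟩ := hF.cones σ hσ
  exact ⟨s, hs⟩

lemma isClosed (hF : IsFan N F) (hσ : σ ∈ F) : IsClosed σ := by
  obtain ⟨s, rfl⟩ := hF.exists_eq_coneGen hσ
  exact isClosed_coneGen s

lemma add_mem (hF : IsFan N F) (hσ : σ ∈ F) (hx : x ∈ σ) (hy : y ∈ σ) : x + y ∈ σ := by
  obtain ⟨s, rfl⟩ := hF.exists_eq_coneGen hσ
  rw [coneGen_eq_hull] at hx hy ⊢
  exact Submodule.add_mem _ hx hy

lemma smul_mem (hF : IsFan N F) (hσ : σ ∈ F) {a : ℝ} (ha : 0 ≤ a) (hx : x ∈ σ) : a • x ∈ σ := by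
  obtain ⟨s, rfl⟩ := hF.exists_eq_coneGen hσ
  rw [coneGen_eq_hull] at hx ⊢
  exact PointedCone.smul_mem _ ha hx

lemma smul_mem_iff (hF : IsFan N F) (hσ : σ ∈ F) {a : ℝ} (ha : 0 < a) : a • x ∈ σ ↔ x ∈ σ :=
  ⟨fun h => inv_smul_smul₀ ha.ne' x ▸ hF.smul_mem hσ (inv_nonneg.2 ha.le) h,
    hF.smul_mem hσ ha.le⟩

lemma exists_isCarrier_point (hF : IsFan N F) (hσ : σ ∈ F) : ∃ q, IsCarrier F σ q := by
  obtain ⟨s, hs⟩ := hF.exists_eq_coneGen hσ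
  have hgen : ∀ v ∈ s, v ∈ σ := fun v hv => by
    rw [hs, coneGen_eq_hull]
    exact Submodule.subset_span hv
  have hsum : ∑ v ∈ s, v ∈ σ := by
    rw [hs]
    exact ⟨fun _ => 1, fun _ => zero_le_one, by simp only [one_smul]⟩
  refine ⟨∑ v ∈ s, v, hσ, hsum, fun τ hτ hsumτ => ?_⟩
  obtain ⟨m, hm, hface⟩ := (hF.inter σ hσ τ hτ).1
  have hmsum : ∑ v ∈ s, m v = 0 := by
    rw [← map_sum]
    exact (hface ▸ ⟨hsum, hsumτ⟩ : ∑ v ∈ s, v ∈ σ ∩ {x | m x = 0}).2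
  have hmgen := (Finset.sum_eq_zero_iff_of_nonneg fun v hv => hm v (hgen v hv)).1 hmsum
  have hmσ : ∀ x ∈ σ, m x = 0 := by
    rw [hs]
    rintro _ ⟨c, -, rfl⟩
    rw [map_sum]
    exact Finset.sum_eq_zero fun v hv => by rw [map_smul, hmgen v hv, smul_zero]
  exact fun x hx => (hface ▸ ⟨hx, hmσ x hx⟩ : x ∈ σ ∩ τ).2

lemma exists_isCarrier (hF : IsFan N F) (hc : FanComplete F) (q : Vr r) :
    ∃ σ, IsCarrier F σ q := by
  obtain ⟨σ₀, hσ₀, hqσ₀⟩ : q ∈ ⋃₀ F := hc ▸ Set.mem_univ q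
  obtain ⟨σ, ⟨hσ, hqσ⟩, hmin⟩ :=
    (hF.finite.subset (Set.sep_subset F (q ∈ ·))).exists_minimal ⟨σ₀, hσ₀, hqσ₀⟩
  refine ⟨σ, hσ, hqσ, fun τ hτ hqτ => ?_⟩
  have hinter : σ ∩ τ ∈ F := hF.faces σ hσ _ (hF.inter σ hσ τ hτ).1
  exact (hmin ⟨hinter, hqσ, hqτ⟩ Set.inter_subset_left).trans Set.inter_subset_right

lemma exists_mem_span_eq_top (hF : IsFan N F) (hc : FanComplete F) (q : Vr r) :
    ∃ σ ∈ F, q ∈ σ ∧ Submodule.span ℝ σ = ⊤ := by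
  obtain ⟨σ, hσ, hqσ, hspan⟩ := exists_mem_le_span_of_subset_sUnion (W := ⊤) hF.finite
    (fun _ => hF.isClosed) (hc ▸ Set.subset_univ _) (Submodule.mem_top (x := q))
  exact ⟨σ, hσ, hqσ, top_le_iff.1 hspan⟩

end IsFan

namespace IsCarrier

lemma smul_add (h : IsCarrier F σ q) (hF : IsFan N F) {a : ℝ} (ha : 0 < a) (hx : x ∈ σ) :
    IsCarrier F σ (a • q + x) := by
  have haq : a • q ∈ σ := hF.smul_mem h.mem ha.le h.point_mem
  refine ⟨h.mem, hF.add_mem h.mem haq hx, fun τ hτ hmem => h.subset τ hτ ?_⟩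
  have haqx : a • q + x ∈ σ ∩ τ := ⟨hF.add_mem h.mem haq hx, hmem⟩
  exact (hF.smul_mem_iff hτ ha).1 ((hF.inter σ h.mem τ hτ).1.mem_of_add_mem haq hx haqx).2

lemma mem_interior (h : IsCarrier F σ q) (hF : IsFan N F) (hc : FanComplete F)
    (hfull : Submodule.span ℝ σ = ⊤) : q ∈ interior σ := by
  rw [mem_interior_iff_mem_nhds]
  filter_upwards [eventually_forall_mem_imp_mem hF.finite (fun _ => hF.isClosed) q] with x hx
  obtain ⟨τ, hτ, hxτ⟩ : x ∈ ⋃₀ F := hc ▸ Set.mem_univ x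
  have hστ : σ ⊆ τ := h.subset τ hτ (hx τ hτ hxτ)
  obtain ⟨m, -, hface⟩ := (hF.inter σ h.mem τ hτ).2
  rw [Set.inter_eq_left.2 hστ] at hface
  have hm : m = 0 := LinearMap.ext_on hfull fun v hv => (hface ▸ hv : v ∈ τ ∩ {x | m x = 0}).2
  rw [hface]
  exact ⟨hxτ, by simp [hm]⟩

lemma subset_ker (h : IsCarrier F σ q) (hF : IsFan N F) (hA : IsWallArrangement F A)
    {f : Module.Dual ℝ (Vr r)} (hf : f ∈ A) (hq : f q = 0) : σ ⊆ LinearMap.ker f := by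
  have hcover : (LinearMap.ker f : Set (Vr r)) ⊆
      ⋃₀ {τ ∈ F | spanDim τ = Module.finrank ℝ (Vr r) - 1} := by
    rw [hA.sUnion_walls]
    exact fun x hx => ⟨f, hf, hx⟩
  obtain ⟨τ, ⟨hτ, hdim⟩, hqτ, hle⟩ := exists_mem_le_span_of_subset_sUnion
    (hF.finite.subset (Set.sep_subset _ _)) (fun τ hτ => hF.isClosed hτ.1) hcover
    (LinearMap.mem_ker.2 hq)
  have heq : LinearMap.ker f = Submodule.span ℝ τ := by
    refine Submodule.eq_of_le_of_finrank_eq hle ?_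
    have hker := Module.Dual.finrank_ker_add_one_of_ne_zero (hA.ne_zero f hf)
    rw [spanDim] at hdim
    omega
  rw [heq]
  exact (h.subset τ hτ hqτ).trans Submodule.subset_span

lemma subset_closedFace (h : IsCarrier F σ q) (hF : IsFan N F) (hA : IsWallArrangement F A) :
    σ ⊆ closedFace A q := by
  intro x hx f hf hq
  by_contra! hfx
  have hcross : IsCarrier F σ ((-f x) • q + f q • x) :=
    h.smul_add hF (neg_pos.2 hfx) (hF.smul_mem h.mem hq hx)
  have hzero : f ((-f x) • q + f q • x) = 0 := by
    simp only [map_add, map_smul, smul_eq_mul]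
    ring
  exact hfx.ne (hcross.subset_ker hF hA hf hzero hx)

lemma apply_ne_zero (h : IsCarrier F σ w) (hF : IsFan N F) (hA : IsWallArrangement F A)
    (hfull : Submodule.span ℝ σ = ⊤) {f : Module.Dual ℝ (Vr r)} (hf : f ∈ A) : f w ≠ 0 := by
  intro hw
  have hker := Submodule.span_le.2 (h.subset_ker hF hA hf hw)
  rw [hfull, top_le_iff, LinearMap.ker_eq_top] at hker
  exact hA.ne_zero f hf hker

-- Walking from `w` to a point avoiding the joins of `w` with the cones of codimension at least two,
-- one can only leave `σ` through a wall, which no point of the segment lies on.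
lemma mem_of_pos_of_notMem_sup_span (h : IsCarrier F σ w) (hF : IsFan N F) (hc : FanComplete F)
    (hA : IsWallArrangement F A) (hfull : Submodule.span ℝ σ = ⊤)
    (hy : ∀ f ∈ A, 0 < f w → 0 < f y)
    (hgen : ∀ κ ∈ F, spanDim κ + 2 ≤ r → y ∉ Submodule.span ℝ κ ⊔ Submodule.span ℝ {w}) :
    y ∈ σ := by
  have hint : ∀ z ∈ segment ℝ w y, z ∈ σ → z ∈ interior σ := by
    intro z hz hzσ
    obtain ⟨κ, hκ⟩ := hF.exists_isCarrier hc z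
    by_cases hκfull : Submodule.span ℝ κ = ⊤
    · exact interior_mono (hκ.subset σ h.mem hzσ) (hκ.mem_interior hF hc hκfull)
    have hlt : spanDim κ < r := by
      simpa only [spanDim, Module.finrank_fin_fun] using Submodule.finrank_lt hκfull
    rcases (by omega : spanDim κ + 2 ≤ r ∨ spanDim κ = r - 1) with hcodim | hcodim
    · by_cases hzw : z = w
      · exact hzw ▸ h.mem_interior hF hc hfull
      · exact absurd (Submodule.subset_span hκ.point_mem)
          (notMem_of_mem_segment_of_notMem_sup_span (hgen κ hκ.mem hcodim) hz hzw)
    · obtain ⟨f, hf, hfz⟩ : z ∈ {x | ∃ f ∈ A, f x = 0} :=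
        hA.sUnion_walls ▸ ⟨κ, ⟨hκ.mem, by simpa using hcodim⟩, hκ.point_mem⟩
      have hpos : ∀ g ∈ A, 0 < g w → 0 < g z := fun g hg hgw =>
        (convex_halfSpace_gt g.isLinear 0).segment_subset hgw (hy g hg hgw) hz
      rcases (h.apply_ne_zero hF hA hfull hf).lt_or_gt with hfw | hfw
      · exact absurd (hpos (-f) (hA.neg_mem f hf) (by simpa using hfw)) (by simp [hfz])
      · exact absurd hfz (hpos f hf hfw).ne'
  have hsub : segment ℝ w y ⊆ interior σ :=
    (convex_segment w y).isPreconnected.subset_of_closure_inter_subset isOpen_interior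
      ⟨w, left_mem_segment ℝ w y, h.mem_interior hF hc hfull⟩
      fun z hz => hint z hz.2 ((hF.isClosed h.mem).closure_interior_subset hz.1)
  exact interior_subset (hsub (right_mem_segment ℝ w y))

lemma mem_of_pos (h : IsCarrier F σ w) (hF : IsFan N F) (hc : FanComplete F)
    (hA : IsWallArrangement F A) (hfull : Submodule.span ℝ σ = ⊤)
    (hy : ∀ f ∈ A, 0 < f w → 0 < f y) : y ∈ σ := by
  set U : Set (Vr r) := {y | ∀ f ∈ A, 0 < f w → 0 < f y}
  have hU : IsOpen U := by
    have hinter : U = ⋂ f ∈ {f ∈ A | 0 < f w}, {y | 0 < f y} := by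
      ext y
      simp [U, and_imp]
    rw [hinter]
    exact (hA.finite.subset (Set.sep_subset _ _)).isOpen_biInter fun f _ =>
      isOpen_lt continuous_const f.continuous_of_finiteDimensional
  have hdense := dense_setOf_forall_notMem_submodule
    (P := (fun κ => Submodule.span ℝ κ ⊔ Submodule.span ℝ {w}) '' {κ ∈ F | spanDim κ + 2 ≤ r})
    ((hF.finite.subset (Set.sep_subset _ _)).image _) <| by
      rintro _ ⟨κ, ⟨-, hκ⟩, rfl⟩ htop
      have hsup := Submodule.finrank_add_le_finrank_add_finrank (Submodule.span ℝ κ)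
        (Submodule.span ℝ {w})
      have hline : Module.finrank ℝ (Submodule.span ℝ {w}) ≤ 1 := by
        simpa using finrank_span_le_card (R := ℝ) {w}
      dsimp only at htop
      rw [htop, finrank_top, Module.finrank_fin_fun] at hsup
      rw [spanDim] at hκ
      omega
  refine closure_minimal ?_ (hF.isClosed h.mem) (hdense.open_subset_closure_inter hU hy)
  exact fun y ⟨hyU, hgen⟩ => h.mem_of_pos_of_notMem_sup_span hF hc hA hfull hyU
    fun κ hκ hdim => hgen _ ⟨κ, ⟨hκ, hdim⟩, rfl⟩

lemma closedFace_subset_of_span_eq_top (h : IsCarrier F σ w) (hF : IsFan N F) (hc : FanComplete F)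
    (hA : IsWallArrangement F A) (hfull : Submodule.span ℝ σ = ⊤) : closedFace A w ⊆ σ := by
  intro x hx
  have hlim : Tendsto (fun t : ℝ => x + t • w) (𝓝[>] 0) (𝓝 x) := by
    refine (Continuous.tendsto' ?_ 0 x (by simp)).mono_left nhdsWithin_le_nhds
    fun_prop
  refine (hF.isClosed h.mem).mem_of_tendsto hlim ?_
  filter_upwards [self_mem_nhdsWithin] with t ht
  refine h.mem_of_pos hF hc hA hfull fun f hf hfw => ?_
  rw [map_add, map_smul, smul_eq_mul]
  exact add_pos_of_nonneg_of_pos (hx f hf hfw.le) (mul_pos ht hfw)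

lemma eq_closedFace (h : IsCarrier F σ q) (hF : IsFan N F) (hc : FanComplete F)
    (hA : IsWallArrangement F A) : σ = closedFace A q := by
  refine (h.subset_closedFace hF hA).antisymm fun x hx => ?_
  obtain ⟨σ₁, hσ₁, hq₁, hfull⟩ := hF.exists_mem_span_eq_top hc q
  obtain ⟨w, hw⟩ := hF.exists_isCarrier_point hσ₁
  have hσ₁q : closedFace A q ⊆ σ₁ :=
    (closedFace_subset (hw.subset_closedFace hF hA hq₁)).trans
      (hw.closedFace_subset_of_span_eq_top hF hc hA hfull)
  obtain ⟨t, htx, ht⟩ := ((eventually_sub_smul_mem_closedFace hA.finite hA.neg_mem hx).and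
    self_mem_nhdsWithin).exists
  have htxσ₁ : t • x ∈ σ₁ := hF.smul_mem hσ₁ (Set.mem_Ioi.1 ht).le (hσ₁q hx)
  have hsum : t • x + (q - t • x) ∈ σ ∩ σ₁ := by
    rw [add_sub_cancel]
    exact ⟨h.point_mem, hq₁⟩
  exact (hF.smul_mem_iff h.mem ht).1
    ((hF.inter σ h.mem σ₁ hσ₁).2.mem_of_add_mem htxσ₁ (hσ₁q htx) hsum).1

end IsCarrier

lemma starAt_eq_range (hF : IsFan N F) (hc : FanComplete F) (hA : IsWallArrangement F A)
    {δ : Set (Vr r)} (hδ : δ ∈ F) :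
    starAt F δ (Submodule.span ℝ δ) = Set.range fun q =>
      (Submodule.span ℝ δ).mkQ '' closedFace (localization A (Submodule.span ℝ δ)) q := by
  obtain ⟨p, hp⟩ := hF.exists_isCarrier_point hδ
  have hpδ : p ∈ Submodule.span ℝ δ := Submodule.subset_span hp.point_mem
  have hker : ∀ f ∈ A, f p = 0 → Submodule.span ℝ δ ≤ LinearMap.ker f :=
    fun f hf hfp => Submodule.span_le.2 (hp.subset_ker hF hA hf hfp)
  refine Set.Subset.antisymm ?_ ?_
  · rintro _ ⟨σ, hσ, hδσ, rfl⟩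
    obtain ⟨q, hq⟩ := hF.exists_isCarrier_point hσ
    have hpq := hq.subset_closedFace hF hA (hδσ hp.point_mem)
    exact ⟨q, by rw [hq.eq_closedFace hF hc hA, image_mkQ_closedFace hA.finite hpδ hker hpq]⟩
  · rintro _ ⟨q, rfl⟩
    obtain ⟨t, hpt, ht⟩ := ((eventually_mem_closedFace_add_smul hA.finite hA.neg_mem p q).and
      self_mem_nhdsWithin).exists
    obtain ⟨σ, hσ⟩ := hF.exists_isCarrier hc (p + t • q)
    have hσeq := hσ.eq_closedFace hF hc hA
    refine ⟨σ, hσ.mem, hp.subset σ hσ.mem (hσeq ▸ hpt), ?_⟩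
    rw [hσeq, image_mkQ_closedFace hA.finite hpδ hker hpt, closedFace_localization_add_smul hpδ ht]

end Fan

theorem stmt16_general {r : ℕ} (N : AddSubgroup (Vr r)) (F : Set (Set (Vr r)))
    (hfan : IsFan N F) (hss : SSymm F)
    (δ δ' : Set (Vr r)) (hδ : δ ∈ F) (hδ' : δ' ∈ F)
    (E : Submodule ℝ (Vr r)) (hE : Submodule.span ℝ δ = E)
    (hE' : Submodule.span ℝ δ' = E) :
    starAt F δ E = starAt F δ' E := by
  obtain ⟨A, hA⟩ := hss.exists_isWallArrangement
  have hstar : ∀ κ ∈ F, Submodule.span ℝ κ = E → starAt F κ E =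
      Set.range fun q => E.mkQ '' closedFace (localization A E) q := by
    rintro κ hκ rfl
    exact starAt_eq_range hfan hss.1 hA hκ
  rw [hstar δ' hδ' hE', hstar δ hδ hE]

/-- in a strongly symmetric fan, the star fan of a cone depends only
on its span: if `span δ = span δ'` then `Star(δ) = Star(δ')`. -/
theorem stmt16 {r : ℕ} (N : AddSubgroup (Vr r)) (F : Set (Set (Vr r)))
    (hN : IsLattice N) (hfan : IsFan N F) (hss : SSymm F)
    (δ δ' : Set (Vr r)) (hδ : δ ∈ F) (hδ' : δ' ∈ F)
    (E : Submodule ℝ (Vr r)) (hE : Submodule.span ℝ δ = E)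
    (hE' : Submodule.span ℝ δ' = E) :
    starAt F δ E = starAt F δ' E :=
  stmt16_general N F hfan hss δ δ' hδ hδ' E hE hE'
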